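/- In the online Ramsey game with targets red C₄ and blue P₆, consider the position in which the five edges v₁v₂, v₂v₃, v₃v₄, v₄v₅, v₅v₆ of a path on six distinct vertices have all been colored red (case R0). From this position Builder can force a red copy of C₄ or a blue copy of P₆ within at most 6 additional rounds, so within at most 11 rounds in total. -/

import Mathlib

open SimpleGraph

/-- The set `S` of edges of the infinite complete graph on `ℕ` contains a copy of
the graph `G`: there is an injective map of the vertices of `G` into `ℕ` sending
every edge of `G` into `S`. -/
def HasCopy {V : Type*} (G : SimpleGraph V) (S : Set (Sym2 ℕ)) : Prop :=
  ∃ f : V → ℕ, Function.Injective f ∧ ∀ a b, G.Adj a b → s(f a, f b) ∈ S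

/-- `BuilderWinsIn G H R B r` means: in the online Ramsey game with targets a red copy
of `G` and a blue copy of `H`, from the position in which the edges in `R` have been
colored red and the edges in `B` have been colored blue, Builder has a strategy that
guarantees, against every Painter strategy, that within at most `r` further rounds the
colored edges contain a red copy of `G` or a blue copy of `H`.  (In each round Builder
chooses a previously unchosen non-loop edge of the infinite complete graph on `ℕ`, and
Painter immediately colors it red or blue; so Builder wins within `r + 1` rounds iff he
has already won, or he can choose an edge such that whichever color Painter gives it,
he can win within `r` further rounds.) -/
def BuilderWinsIn {V W : Type*} (G : SimpleGraph V) (H : SimpleGraph W) :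
    Set (Sym2 ℕ) → Set (Sym2 ℕ) → ℕ → Prop
  | R, B, 0 => HasCopy G R ∨ HasCopy H B
  | R, B, (r + 1) => HasCopy G R ∨ HasCopy H B ∨
      ∃ e : Sym2 ℕ, ¬ e.IsDiag ∧ e ∉ R ∧ e ∉ B ∧
        BuilderWinsIn G H (insert e R) B r ∧ BuilderWinsIn G H R (insert e B) r

/-- The online size Ramsey number `ř(G, H)`: the least `t` such that, starting from the
empty position, Builder can force a red copy of `G` or a blue copy of `H` within at
most `t` rounds. -/
noncomputable def onlineRamsey {V W : Type*} (G : SimpleGraph V) (H : SimpleGraph W) : ℕ :=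
  sInf {t | BuilderWinsIn G H ∅ ∅ t}

/-!
A red path on four vertices forces Painter to color the edge joining its ends blue. On the red path
`v₁ ⋯ v₆` (`vᵢ₊₁` is `v i` below) this makes `v₁v₄`, `v₂v₅`, `v₃v₆` blue. Builder then plays `v₁v₅`.

* If it is red, the 5-cycle `v₁v₂v₃v₄v₅` forces `v₁v₃` and `v₂v₄`, and `v₅v₂v₄v₁v₃v₆` is blue.
* If it is blue, Builder plays `v₂v₆`: blue completes `v₄v₁v₅v₂v₆v₃`, while red makes `v₂v₃v₄v₅v₆`
  a 5-cycle, which forces `v₄v₆`, and `v₂v₅v₁v₄v₆v₃` is blue.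
-/

namespace BuilderWinsIn

variable {V W : Type*} {G : SimpleGraph V} {H : SimpleGraph W} {R B : Set (Sym2 ℕ)} {r : ℕ}

lemma of_hasCopy_red (h : HasCopy G R) : BuilderWinsIn G H R B r := by
  cases r <;> exact .inl h

lemma of_hasCopy_blue (h : HasCopy H B) : BuilderWinsIn G H R B r := by
  cases r with
  | zero => exact .inr h
  | succ r => exact .inr (.inl h)

lemma succ (h : BuilderWinsIn G H R B r) : BuilderWinsIn G H R B (r + 1) := by
  induction r generalizing R B with
  | zero => exact h.elim of_hasCopy_red of_hasCopy_blue
  | succ r ih =>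
    obtain hG | hH | ⟨e, he, heR, heB, hred, hblue⟩ := h
    · exact of_hasCopy_red hG
    · exact of_hasCopy_blue hH
    · exact .inr (.inr ⟨e, he, heR, heB, ih hred, ih hblue⟩)

-- The edge need not be new: if it is already colored, one of the two positions is the current one.
lemma of_insert {e : Sym2 ℕ} (he : ¬ e.IsDiag) (hred : BuilderWinsIn G H (insert e R) B r)
    (hblue : BuilderWinsIn G H R (insert e B) r) : BuilderWinsIn G H R B (r + 1) := by
  by_cases heR : e ∈ R
  · rw [Set.insert_eq_of_mem heR] at hred
    exact hred.succ
  by_cases heB : e ∈ B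
  · rw [Set.insert_eq_of_mem heB] at hblue
    exact hblue.succ
  exact .inr (.inr ⟨e, he, heR, heB, hred, hblue⟩)

end BuilderWinsIn

/-- `p` lists the vertices, in order, of a path with `n` edges, all of which lie in `S`. -/
def IsPathIn {n : ℕ} (S : Set (Sym2 ℕ)) (p : Fin (n + 1) → ℕ) : Prop :=
  Function.Injective p ∧ ∀ i : Fin n, s(p i.castSucc, p i.succ) ∈ S

namespace IsPathIn

variable {n : ℕ} {S : Set (Sym2 ℕ)}

lemma hasCopy_pathGraph {p : Fin (n + 1) → ℕ} (hp : IsPathIn S p) :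
    HasCopy (pathGraph (n + 1)) S := by
  have mem_of_succ {a b : Fin (n + 1)} (hab : a.val + 1 = b.val) : s(p a, p b) ∈ S := by
    have hedge := hp.2 ⟨a, by lia⟩
    rwa [show Fin.succ ⟨a.val, _⟩ = b from Fin.ext hab] at hedge
  refine ⟨p, hp.1, fun a b hab => ?_⟩
  obtain hab | hba := pathGraph_adj.mp hab
  · exact mem_of_succ hab
  · exact Sym2.eq_swap ▸ mem_of_succ hba

lemma hasCopy_cycleGraph_insert {p : Fin (n + 2) → ℕ} (hp : IsPathIn S p) :
    HasCopy (cycleGraph (n + 2)) (insert s(p 0, p (Fin.last (n + 1))) S) := by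
  have mem_add_one (a : Fin (n + 2)) :
      s(p a, p (a + 1)) ∈ insert s(p 0, p (Fin.last (n + 1))) S := by
    induction a using Fin.lastCases with
    | last => exact .inl (by rw [Fin.last_add_one, Sym2.eq_swap])
    | cast i => exact .inr (by rw [Fin.coeSucc_eq_succ]; exact hp.2 i)
  refine ⟨p, hp.1, fun a b hab => ?_⟩
  obtain hba | hab := cycleGraph_adj.mp hab
  · obtain rfl := sub_eq_iff_eq_add'.mp hba
    exact Sym2.eq_swap (a := p b) ▸ mem_add_one b
  · obtain rfl := sub_eq_iff_eq_add'.mp hab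
    exact mem_add_one a

lemma builderWinsIn_succ_of_insert_blue {W : Type*} {H : SimpleGraph W} {R B : Set (Sym2 ℕ)} {r : ℕ}
    {p : Fin (n + 2) → ℕ} (hp : IsPathIn R p)
    (h : BuilderWinsIn (cycleGraph (n + 2)) H R (insert s(p 0, p (Fin.last (n + 1))) B) r) :
    BuilderWinsIn (cycleGraph (n + 2)) H R B (r + 1) := by
  have hends : p 0 ≠ p (Fin.last (n + 1)) := hp.1.ne Fin.last_pos.ne
  exact .of_insert (by simpa using hends) (.of_hasCopy_red hp.hasCopy_cycleGraph_insert) h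

end IsPathIn

section SixVertices

variable {v : Fin 6 → ℕ} {R B : Set (Sym2 ℕ)}

lemma builderWinsIn_two_of_red_chord (hv : Function.Injective v)
    (hR : {s(v 0, v 1), s(v 2, v 3), s(v 3, v 4), s(v 0, v 4)} ⊆ R)
    (hB : {s(v 0, v 3), s(v 1, v 4), s(v 2, v 5)} ⊆ B) :
    BuilderWinsIn (cycleGraph 4) (pathGraph 6) R B 2 := by
  simp only [Set.insert_subset_iff, Set.singleton_subset_iff] at hR hB
  have hred₀₂ : IsPathIn R (v ∘ ![0, 4, 3, 2]) :=
    ⟨hv.comp (by decide), by simp [Fin.forall_fin_succ, Sym2.eq_swap, hR]⟩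
  have hred₁₃ : IsPathIn R (v ∘ ![1, 0, 4, 3]) :=
    ⟨hv.comp (by decide), by simp [Fin.forall_fin_succ, Sym2.eq_swap, hR]⟩
  have hblue : IsPathIn (insert s(v 1, v 3) (insert s(v 0, v 2) B)) (v ∘ ![4, 1, 3, 0, 2, 5]) :=
    ⟨hv.comp (by decide), by simp [Fin.forall_fin_succ, Sym2.eq_swap, hB]⟩
  exact hred₀₂.builderWinsIn_succ_of_insert_blue <| hred₁₃.builderWinsIn_succ_of_insert_blue <|
    .of_hasCopy_blue hblue.hasCopy_pathGraph

lemma builderWinsIn_two_of_blue_chord (hv : Function.Injective v)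
    (hR : {s(v 1, v 2), s(v 2, v 3)} ⊆ R)
    (hB : {s(v 0, v 3), s(v 1, v 4), s(v 2, v 5), s(v 0, v 4)} ⊆ B) :
    BuilderWinsIn (cycleGraph 4) (pathGraph 6) R B 2 := by
  simp only [Set.insert_subset_iff, Set.singleton_subset_iff] at hR hB
  refine .of_insert (e := s(v 1, v 5)) (by simp [hv.eq_iff]) ?red ?blue
  case red =>
    have hred₃₅ : IsPathIn (insert s(v 1, v 5) R) (v ∘ ![3, 2, 1, 5]) :=
      ⟨hv.comp (by decide), by simp [Fin.forall_fin_succ, Sym2.eq_swap, hR]⟩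
    have hblue : IsPathIn (insert s(v 3, v 5) B) (v ∘ ![1, 4, 0, 3, 5, 2]) :=
      ⟨hv.comp (by decide), by simp [Fin.forall_fin_succ, Sym2.eq_swap, hB]⟩
    exact hred₃₅.builderWinsIn_succ_of_insert_blue <| .of_hasCopy_blue hblue.hasCopy_pathGraph
  case blue =>
    have hblue : IsPathIn (insert s(v 1, v 5) B) (v ∘ ![3, 0, 4, 1, 5, 2]) :=
      ⟨hv.comp (by decide), by simp [Fin.forall_fin_succ, Sym2.eq_swap, hB]⟩
    exact .of_hasCopy_blue hblue.hasCopy_pathGraph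

theorem builder_wins_case_R0_general (hv : Function.Injective v)
    (hR : {s(v 0, v 1), s(v 1, v 2), s(v 2, v 3), s(v 3, v 4), s(v 4, v 5)} ⊆ R) :
    BuilderWinsIn (cycleGraph 4) (pathGraph 6) R B 6 := by
  simp only [Set.insert_subset_iff, Set.singleton_subset_iff] at hR
  have hred₀₃ : IsPathIn R (v ∘ ![0, 1, 2, 3]) :=
    ⟨hv.comp (by decide), by simp [Fin.forall_fin_succ, hR]⟩
  have hred₁₄ : IsPathIn R (v ∘ ![1, 2, 3, 4]) :=
    ⟨hv.comp (by decide), by simp [Fin.forall_fin_succ, hR]⟩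
  have hred₂₅ : IsPathIn R (v ∘ ![2, 3, 4, 5]) :=
    ⟨hv.comp (by decide), by simp [Fin.forall_fin_succ, hR]⟩
  refine hred₀₃.builderWinsIn_succ_of_insert_blue <| hred₁₄.builderWinsIn_succ_of_insert_blue <|
    hred₂₅.builderWinsIn_succ_of_insert_blue ?_
  refine .of_insert (e := s(v 0, v 4)) (by simp [hv.eq_iff]) ?red ?blue
  case red =>
    exact builderWinsIn_two_of_red_chord hv (by simp [Set.insert_subset_iff, hR])
      (by simp [Set.insert_subset_iff])
  case blue =>
    exact builderWinsIn_two_of_blue_chord hv (by simp [Set.insert_subset_iff, hR])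
      (by simp [Set.insert_subset_iff])

end SixVertices

/-- Case `R0`: in the online Ramsey game with targets red `C₄` and blue `P₆`,
from the position in which the five edges `v₁v₂, v₂v₃, v₃v₄, v₄v₅, v₅v₆` of a path on
six distinct vertices have been colored red, red, red, red, red respectively,
Builder can force a red copy of `C₄` or a blue copy of `P₆` within at most 6 additional
rounds (so within at most 11 rounds in total). -/
theorem builder_wins_case_R0 (v : Fin 6 → ℕ) (hv : Function.Injective v) :
    BuilderWinsIn (cycleGraph 4) (pathGraph 6)
      {s(v 0, v 1), s(v 1, v 2), s(v 2, v 3), s(v 3, v 4), s(v 4, v 5)}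
      (∅ : Set (Sym2 ℕ)) 6 :=
  builder_wins_case_R0_general hv subset_rfl
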